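/- Let n ≥ 2, let r ∈ (0,1], let i₁ ≥ 1 be an integer, and let g₂, …, g_n be holomorphic functions on Δ_r with |g_l(t)| ≤ 1/6 for all t ∈ Δ_r and all l = 2, …, n. Then for every holomorphic function F on the unit polydisc Δⁿ ⊂ ℂⁿ, ∫_{Δⁿ} |F|² dλ_n ≥ (π/3)^{n−1} · i₁ · ∫_{Δ_r} |F(t^{i₁}, g₂(t), …, g_n(t))|² |t|^{2(i₁−1)} dλ₁(t). -/

import Mathlib

open MeasureTheory Set Filter ENNReal

/-!
By the mean value property on circles, integrated in polar coordinates and iterated over the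
coordinates, a holomorphic `F` satisfies `vol(P) ‖F(a)‖ ≤ ∫_P ‖F‖` on every polydisc `P` centred
at `a`, and Hölder's inequality upgrades this to `‖F‖ ^ p`. If `|a_l| ≤ ρ_l < 1`, then the unit
polydisc contains the one centred at `a` with polyradius `1 - ρ`. Applied to the slice of `F` at
height `z₁ = t ^ k`, this bounds the value of `F` on the curve by the integral over the slice. The
change of variables `z₁ = t ^ k` has real Jacobian `k ^ 2 |t| ^ (2 (k - 1))` and is `k`-to-one, so
that a single factor `k` survives when the slices are integrated.
-/

theorem measure_univ_mul_rpow_le_lintegral_rpow {α : Type*} {_ : MeasurableSpace α}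
    {μ : Measure α} [IsFiniteMeasure μ] {f : α → ℝ≥0∞} (hf : AEMeasurable f μ) {c : ℝ≥0∞}
    (hc : μ univ * c ≤ ∫⁻ x, f x ∂μ) {p : ℝ} (hp : 1 ≤ p) :
    μ univ * c ^ p ≤ ∫⁻ x, f x ^ p ∂μ := by
  have hp0 : 0 < p := by linarith
  rcases eq_or_ne (μ univ) 0 with hμ | hμ
  · simp [hμ]
  have hoelder : ∫⁻ x, f x ∂μ ≤ (∫⁻ x, f x ^ p ∂μ) ^ (1 / p) * μ univ ^ (1 - 1 / p) := by
    simpa [eLpNorm'] using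
      eLpNorm'_le_eLpNorm'_mul_rpow_measure_univ one_pos hp hf.aestronglyMeasurable
  have split : μ univ ^ (p - 1) * μ univ = μ univ ^ p := by
    simpa using (ENNReal.rpow_add (p - 1) 1 hμ (measure_ne_top _ _)).symm
  have scaled : μ univ ^ (p - 1) * (μ univ * c ^ p) ≤ μ univ ^ (p - 1) * ∫⁻ x, f x ^ p ∂μ :=
    calc μ univ ^ (p - 1) * (μ univ * c ^ p)
        = (μ univ * c) ^ p := by
          rw [← mul_assoc, split, ENNReal.mul_rpow_of_nonneg _ _ hp0.le]
      _ ≤ ((∫⁻ x, f x ^ p ∂μ) ^ (1 / p) * μ univ ^ (1 - 1 / p)) ^ p :=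
          ENNReal.rpow_le_rpow (hc.trans hoelder) hp0.le
      _ = μ univ ^ (p - 1) * ∫⁻ x, f x ^ p ∂μ := by
          rw [ENNReal.mul_rpow_of_nonneg _ _ hp0.le, ← ENNReal.rpow_mul, ← ENNReal.rpow_mul,
            one_div_mul_cancel hp0.ne', sub_mul, one_div_mul_cancel hp0.ne', one_mul,
            ENNReal.rpow_one, mul_comm]
  refine (ENNReal.mul_le_mul_iff_right ?_ ?_).1 scaled
  · exact (ENNReal.rpow_pos (pos_iff_ne_zero.2 hμ) (measure_ne_top _ _)).ne'
  · exact ENNReal.rpow_ne_top_of_nonneg (by linarith) (measure_ne_top _ _)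

theorem lintegral_pi_eq_lintegral_cons {n : ℕ} {α : Fin (n + 1) → Type*}
    {_ : ∀ i, MeasurableSpace (α i)} (μ : ∀ i, Measure (α i)) [∀ i, SigmaFinite (μ i)]
    {f : (∀ i, α i) → ℝ≥0∞} (hf : AEMeasurable f (Measure.pi μ)) :
    ∫⁻ z, f z ∂Measure.pi μ =
      ∫⁻ x, ∫⁻ y, f (Fin.cons x y) ∂Measure.pi (fun j => μ j.succ) ∂μ 0 := by
  have hcons : MeasurePreserving (MeasurableEquiv.piFinSuccAbove α 0).symm _ _ :=
    (measurePreserving_piFinSuccAbove μ 0).symm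
  rw [← hcons.lintegral_comp_emb (MeasurableEquiv.measurableEmbedding _),
    lintegral_prod _]
  · refine lintegral_congr fun x => lintegral_congr fun y => congrArg f ?_
    exact Fin.insertNth_zero x y
  · exact hf.comp_quasiMeasurePreserving hcons.quasiMeasurePreserving

section MeanValue

open Metric Real

variable {E : Type*} [NormedAddCommGroup E] [NormedSpace ℂ E]

theorem lintegral_eq_lintegral_circleMap {f : ℂ → ℝ≥0∞} (hf : Measurable f) (a : ℂ) :
    ∫⁻ z, f z =
      ∫⁻ ρ in Ioi (0 : ℝ), ENNReal.ofReal ρ * ∫⁻ θ in Ioo (-π) π, f (circleMap a ρ θ) := by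
  have polarCoord_symm_eq (q : ℝ × ℝ) :
      a + Complex.polarCoord.symm q = circleMap a q.1 q.2 := by
    rw [Complex.polarCoord_symm_apply, circleMap, Complex.exp_mul_I]
    simp only [Complex.ofReal_cos, Complex.ofReal_sin]
  have measurable_circleMap : Measurable fun q : ℝ × ℝ => circleMap a q.1 q.2 := by
    unfold circleMap
    fun_prop
  rw [← lintegral_add_left_eq_self f a, ← Complex.lintegral_comp_polarCoord_symm,
    polarCoord_target]
  simp only [smul_eq_mul, polarCoord_symm_eq]
  rw [Measure.volume_eq_prod, ← Measure.prod_restrict, lintegral_prod _ (by fun_prop)]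
  simp only [lintegral_const_mul' _ _ ofReal_ne_top]

theorem setLIntegral_ball_eq_lintegral_circleMap {f : ℂ → ℝ≥0∞} {a : ℂ} {R : ℝ}
    (hf : ContinuousOn f (ball a R)) :
    ∫⁻ z in ball a R, f z =
      ∫⁻ ρ in Ioo 0 R, ENNReal.ofReal ρ * ∫⁻ θ in Ioo (-π) π, f (circleMap a ρ θ) := by
  classical
  have measurable_indicator : Measurable ((ball a R).indicator f) := by
    rw [← piecewise_eq_indicator]
    exact hf.measurable_piecewise continuousOn_const measurableSet_ball
  have circleMap_mem_ball {ρ : ℝ} (hρ : 0 < ρ) (θ : ℝ) :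
      circleMap a ρ θ ∈ ball a R ↔ ρ ∈ Iio R := by
    rw [mem_ball_iff_norm, circleMap_sub_center, norm_circleMap_zero, abs_of_pos hρ, mem_Iio]
  rw [← lintegral_indicator measurableSet_ball,
    lintegral_eq_lintegral_circleMap measurable_indicator a,
    ← Iio_inter_Ioi (a := R) (b := 0), ← setLIntegral_indicator measurableSet_Iio]
  refine setLIntegral_congr_fun measurableSet_Ioi fun ρ hρ => ?_
  by_cases hρR : ρ ∈ Iio R <;> simp [circleMap_mem_ball hρ, hρR]

variable [CompleteSpace E]

theorem setIntegral_circleMap_of_diffContOnCl {f : ℂ → E} {a : ℂ} {R : ℝ}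
    (hf : DiffContOnCl ℂ f (ball a |R|)) :
    ∫ θ in Ioo (-π) π, f (circleMap a R θ) = (2 * π) • f a := by
  have periodic : Function.Periodic (fun θ => f (circleMap a R θ)) (2 * π) := fun θ => by
    simp only [periodic_circleMap a R θ]
  have shift := periodic.intervalIntegral_add_eq 0 (-π)
  rw [zero_add, show -π + 2 * π = π by ring] at shift
  rw [← hf.circleAverage, Real.circleAverage_def, shift, smul_inv_smul₀ two_pi_pos.ne',
    intervalIntegral.integral_of_le (by linarith [pi_pos]), integral_Ioc_eq_integral_Ioo]

theorem volume_ball_mul_enorm_le_setLIntegral {f : ℂ → E} {a : ℂ} {R : ℝ}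
    (hf : DifferentiableOn ℂ f (ball a R)) :
    volume (ball a R) * ‖f a‖ₑ ≤ ∫⁻ z in ball a R, ‖f z‖ₑ := by
  have circle_le {ρ : ℝ} (hρ : ρ ∈ Ioo 0 R) :
      ∫⁻ _ in Ioo (-π) π, ‖f a‖ₑ ≤ ∫⁻ θ in Ioo (-π) π, ‖f (circleMap a ρ θ)‖ₑ := by
    have hsub : closedBall a |ρ| ⊆ ball a R :=
      closedBall_subset_ball (by rw [abs_of_pos hρ.1]; exact hρ.2)
    calc ∫⁻ _ in Ioo (-π) π, ‖f a‖ₑ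
        = ‖(2 * π) • f a‖ₑ := by
          rw [setLIntegral_const, volume_Ioo, enorm_smul, Real.enorm_of_nonneg two_pi_pos.le,
            mul_comm, sub_neg_eq_add, two_mul]
      _ = ‖∫ θ in Ioo (-π) π, f (circleMap a ρ θ)‖ₑ := by
          rw [setIntegral_circleMap_of_diffContOnCl (hf.diffContOnCl_ball hsub)]
      _ ≤ _ := enorm_integral_le_lintegral_enorm _
  calc volume (ball a R) * ‖f a‖ₑ
      = ∫⁻ _ in ball a R, ‖f a‖ₑ := by rw [setLIntegral_const, mul_comm]
    _ = ∫⁻ ρ in Ioo 0 R, ENNReal.ofReal ρ * ∫⁻ _ in Ioo (-π) π, ‖f a‖ₑ :=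
        setLIntegral_ball_eq_lintegral_circleMap continuousOn_const
    _ ≤ ∫⁻ ρ in Ioo 0 R, ENNReal.ofReal ρ * ∫⁻ θ in Ioo (-π) π, ‖f (circleMap a ρ θ)‖ₑ :=
        setLIntegral_mono' measurableSet_Ioo fun ρ hρ => mul_le_mul_right (circle_le hρ) _
    _ = ∫⁻ z in ball a R, ‖f z‖ₑ :=
        (setLIntegral_ball_eq_lintegral_circleMap hf.continuousOn.enorm).symm

end MeanValue

section Polydisc

open Metric Real

variable {E : Type*} [NormedAddCommGroup E] [NormedSpace ℂ E]

/-- The open polydisc with centre `a` and polyradius `R`. -/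
def polydisc {ι : Type*} (a : ι → ℂ) (R : ι → ℝ) : Set (ι → ℂ) :=
  univ.pi fun i => ball (a i) (R i)

theorem setOf_norm_lt_one_eq_polydisc {ι : Type*} :
    {z : ι → ℂ | ∀ i, ‖z i‖ < 1} = polydisc 0 1 := by
  ext z
  simp [polydisc]

theorem measurableSet_polydisc {ι : Type*} [Finite ι] (a : ι → ℂ) (R : ι → ℝ) :
    MeasurableSet (polydisc a R) :=
  MeasurableSet.univ_pi fun _ => measurableSet_ball

theorem volume_polydisc {ι : Type*} [Fintype ι] (a : ι → ℂ) (R : ι → ℝ) :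
    volume (polydisc a R) = ∏ i, volume (ball (a i) (R i)) :=
  volume_pi_pi _

theorem volume_polydisc_ne_top {ι : Type*} [Fintype ι] (a : ι → ℂ) (R : ι → ℝ) :
    volume (polydisc a R) ≠ ∞ := by
  rw [volume_polydisc]
  exact ENNReal.prod_ne_top fun _ _ => measure_ball_lt_top.ne

theorem polydisc_subset_polydisc {ι : Type*} {a b : ι → ℂ} {R S : ι → ℝ}
    (h : ∀ i, dist (a i) (b i) + R i ≤ S i) : polydisc a R ⊆ polydisc b S :=
  pi_mono fun i _ => ball_subset_ball' (by linarith [h i])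

theorem cons_mem_polydisc {n : ℕ} {a : Fin (n + 1) → ℂ} {R : Fin (n + 1) → ℝ} {x : ℂ}
    {y : Fin n → ℂ} :
    (Fin.cons x y : Fin (n + 1) → ℂ) ∈ polydisc a R ↔
      x ∈ ball (a 0) (R 0) ∧ y ∈ polydisc (Fin.tail a) (Fin.tail R) := by
  simp only [polydisc, mem_univ_pi, Fin.forall_fin_succ, Fin.cons_zero, Fin.cons_succ, Fin.tail]

theorem setLIntegral_polydisc_eq_setLIntegral_cons {n : ℕ} {a : Fin (n + 1) → ℂ}
    {R : Fin (n + 1) → ℝ} {f : (Fin (n + 1) → ℂ) → ℝ≥0∞}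
    (hf : AEMeasurable f (volume.restrict (polydisc a R))) :
    ∫⁻ z in polydisc a R, f z =
      ∫⁻ x in ball (a 0) (R 0), ∫⁻ y in polydisc (Fin.tail a) (Fin.tail R), f (Fin.cons x y) := by
  simp only [polydisc, volume_pi, Measure.restrict_pi_pi] at hf ⊢
  exact lintegral_pi_eq_lintegral_cons _ hf

section Slices

variable {n : ℕ} {a : Fin (n + 1) → ℂ} {R : Fin (n + 1) → ℝ} {F : (Fin (n + 1) → ℂ) → E}

theorem differentiableOn_comp_cons_left (hF : DifferentiableOn ℂ F (polydisc a R)) {x : ℂ}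
    (hx : x ∈ ball (a 0) (R 0)) :
    DifferentiableOn ℂ (fun y : Fin n → ℂ => F (Fin.cons x y))
      (polydisc (Fin.tail a) (Fin.tail R)) :=
  hF.comp ((differentiableOn_const x).finCons differentiableOn_id) fun _ hy =>
    cons_mem_polydisc.2 ⟨hx, hy⟩

theorem differentiableOn_comp_cons_right (hF : DifferentiableOn ℂ F (polydisc a R))
    {y : Fin n → ℂ} (hy : y ∈ polydisc (Fin.tail a) (Fin.tail R)) :
    DifferentiableOn ℂ (fun x : ℂ => F (Fin.cons x y)) (ball (a 0) (R 0)) :=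
  hF.comp (DifferentiableOn.finCons (F' := fun _ => ℂ) differentiableOn_id
    (differentiableOn_const y)) fun _ hx => cons_mem_polydisc.2 ⟨hx, hy⟩

end Slices

variable [CompleteSpace E]

theorem volume_polydisc_mul_enorm_le_setLIntegral {n : ℕ} {a : Fin n → ℂ} {R : Fin n → ℝ}
    (hR : ∀ i, 0 < R i) {F : (Fin n → ℂ) → E} (hF : DifferentiableOn ℂ F (polydisc a R)) :
    volume (polydisc a R) * ‖F a‖ₑ ≤ ∫⁻ z in polydisc a R, ‖F z‖ₑ := by
  induction n with
  | zero =>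
    have : F = fun _ => F a := funext fun z => congrArg F (Subsingleton.elim z a)
    rw [this, setLIntegral_const, mul_comm]
  | succ n ih =>
    set P := polydisc (Fin.tail a) (Fin.tail R)
    have tail_mem : Fin.tail a ∈ P := fun i _ => mem_ball_self (hR i.succ)
    calc volume (polydisc a R) * ‖F a‖ₑ
        = volume P * (volume (ball (a 0) (R 0)) * ‖F (Fin.cons (a 0) (Fin.tail a))‖ₑ) := by
          rw [Fin.cons_self_tail, volume_polydisc, volume_polydisc, Fin.prod_univ_succ]
          simp only [Fin.tail]
          ring
      _ ≤ volume P * ∫⁻ x in ball (a 0) (R 0), ‖F (Fin.cons x (Fin.tail a))‖ₑ := by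
          gcongr
          exact volume_ball_mul_enorm_le_setLIntegral (differentiableOn_comp_cons_right hF tail_mem)
      _ = ∫⁻ x in ball (a 0) (R 0), volume P * ‖F (Fin.cons x (Fin.tail a))‖ₑ :=
          (lintegral_const_mul' _ _ (volume_polydisc_ne_top _ _)).symm
      _ ≤ ∫⁻ x in ball (a 0) (R 0), ∫⁻ y in P, ‖F (Fin.cons x y)‖ₑ :=
          setLIntegral_mono' measurableSet_ball fun x hx =>
            ih (fun i => hR i.succ) (differentiableOn_comp_cons_left hF hx)
      _ = ∫⁻ z in polydisc a R, ‖F z‖ₑ :=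
          (setLIntegral_polydisc_eq_setLIntegral_cons
            (hF.continuousOn.enorm.aemeasurable (measurableSet_polydisc a R))).symm

theorem volume_polydisc_mul_enorm_rpow_le_setLIntegral {n : ℕ} {a : Fin n → ℂ} {R : Fin n → ℝ}
    (hR : ∀ i, 0 < R i) {F : (Fin n → ℂ) → E} (hF : DifferentiableOn ℂ F (polydisc a R))
    {p : ℝ} (hp : 1 ≤ p) :
    volume (polydisc a R) * ‖F a‖ₑ ^ p ≤ ∫⁻ z in polydisc a R, ‖F z‖ₑ ^ p := by
  have : Fact (volume (polydisc a R) < ∞) := ⟨(volume_polydisc_ne_top a R).lt_top⟩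
  have hL1 := volume_polydisc_mul_enorm_le_setLIntegral hR hF
  rw [← Measure.restrict_apply_univ] at hL1 ⊢
  exact measure_univ_mul_rpow_le_lintegral_rpow
    (hF.continuousOn.enorm.aemeasurable (measurableSet_polydisc a R)) hL1 hp

theorem prod_mul_enorm_rpow_le_setLIntegral_polydisc {n : ℕ} {a : Fin n → ℂ} {ρ : Fin n → ℝ}
    (ha : ∀ i, ‖a i‖ ≤ ρ i) (hρ : ∀ i, ρ i < 1) {F : (Fin n → ℂ) → E}
    (hF : DifferentiableOn ℂ F (polydisc 0 1)) {p : ℝ} (hp : 1 ≤ p) :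
    ENNReal.ofReal (∏ i, π * (1 - ρ i) ^ 2) * ‖F a‖ₑ ^ p ≤ ∫⁻ z in polydisc 0 1, ‖F z‖ₑ ^ p := by
  have hR (i : Fin n) : 0 < 1 - ρ i := sub_pos.2 (hρ i)
  have hsub : polydisc a (fun i => 1 - ρ i) ⊆ polydisc 0 1 :=
    polydisc_subset_polydisc fun i => by
      simp only [Pi.zero_apply, dist_zero_right, Pi.one_apply]
      linarith [ha i]
  have hvol : ENNReal.ofReal (∏ i, π * (1 - ρ i) ^ 2) = volume (polydisc a fun i => 1 - ρ i) := by
    rw [volume_polydisc, ENNReal.ofReal_prod_of_nonneg fun i _ => by positivity]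
    refine Finset.prod_congr rfl fun i _ => ?_
    rw [Complex.volume_ball, mul_comm, ENNReal.ofReal_mul (by positivity),
      ENNReal.ofReal_pow (hR i).le, ← NNReal.coe_real_pi, ofReal_coe_nnreal]
  calc ENNReal.ofReal (∏ i, π * (1 - ρ i) ^ 2) * ‖F a‖ₑ ^ p
      ≤ ∫⁻ z in polydisc a (fun i => 1 - ρ i), ‖F z‖ₑ ^ p :=
        hvol ▸ volume_polydisc_mul_enorm_rpow_le_setLIntegral hR (hF.mono hsub) hp
    _ ≤ ∫⁻ z in polydisc 0 1, ‖F z‖ₑ ^ p := lintegral_mono_set hsub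

end Polydisc

section PowerMap

open Real

theorem setLIntegral_abs_det_fderiv_mul_le_card_mul {E : Type*} [NormedAddCommGroup E]
    [NormedSpace ℝ E] [FiniteDimensional ℝ E] [MeasurableSpace E] [BorelSpace E]
    (μ : Measure E) [μ.IsAddHaarMeasure] {ι : Type*} {J : Finset ι} {s : Set E}
    (hs : MeasurableSet s) {S : ι → Set E} (hS : ∀ j ∈ J, MeasurableSet (S j))
    (hcover : s ⊆ ⋃ j ∈ J, S j) {f : E → E} {f' : E → E →L[ℝ] E}
    (hf' : ∀ x ∈ s, HasFDerivWithinAt f (f' x) s x) (hinj : ∀ j ∈ J, InjOn f (s ∩ S j))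
    (G : E → ℝ≥0∞) :
    ∫⁻ x in s, ENNReal.ofReal |(f' x).det| * G (f x) ∂μ ≤ J.card * ∫⁻ y in f '' s, G y ∂μ := by
  set w : E → ℝ≥0∞ := fun x => ENNReal.ofReal |(f' x).det| * G (f x) with hw
  have piece_le {j : ι} (hj : j ∈ J) : ∫⁻ x in s ∩ S j, w x ∂μ ≤ ∫⁻ y in f '' s, G y ∂μ := by
    rw [hw, ← lintegral_image_eq_lintegral_abs_det_fderiv_mul μ (hs.inter (hS j hj))
      (fun x hx => (hf' x hx.1).mono inter_subset_left) (hinj j hj)]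
    exact lintegral_mono_set (image_mono inter_subset_left)
  have hcover' : s ⊆ ⋃ j : J, s ∩ S j := fun x hx => by
    simpa [hx] using hcover hx
  calc ∫⁻ x in s, w x ∂μ
      ≤ ∫⁻ x in ⋃ j : J, s ∩ S j, w x ∂μ := lintegral_mono_set hcover'
    _ ≤ ∑ j : J, ∫⁻ x in s ∩ S j, w x ∂μ := by
        simpa only [tsum_fintype] using lintegral_iUnion_le (μ := μ) (fun j : J => s ∩ S j) w
    _ ≤ ∑ _j : J, ∫⁻ y in f '' s, G y ∂μ := Finset.sum_le_sum fun j _ => piece_le j.2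
    _ = J.card * ∫⁻ y in f '' s, G y ∂μ := by simp

theorem det_restrictScalars_toSpanSingleton (c : ℂ) :
    ((ContinuousLinearMap.toSpanSingleton ℂ c).restrictScalars ℝ).det = ‖c‖ ^ 2 := by
  simp [ContinuousLinearMap.det, LinearMap.det_restrictScalars, Algebra.norm_complex_eq,
    Complex.normSq_eq_norm_sq]

theorem setLIntegral_enorm_deriv_sq_mul_le_card_mul {ι : Type*} {J : Finset ι} {s : Set ℂ}
    (hs : MeasurableSet s) {S : ι → Set ℂ} (hS : ∀ j ∈ J, MeasurableSet (S j))
    (hcover : s ⊆ ⋃ j ∈ J, S j) {f f' : ℂ → ℂ}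
    (hf' : ∀ z ∈ s, HasDerivWithinAt f (f' z) s z) (hinj : ∀ j ∈ J, InjOn f (s ∩ S j))
    (G : ℂ → ℝ≥0∞) :
    ∫⁻ z in s, ‖f' z‖ₑ ^ 2 * G (f z) ≤ J.card * ∫⁻ w in f '' s, G w := by
  refine le_of_eq_of_le ?_ (setLIntegral_abs_det_fderiv_mul_le_card_mul volume hs hS hcover
    (fun z hz => (hf' z hz).hasFDerivWithinAt.restrictScalars ℝ) hinj G)
  refine lintegral_congr fun z => ?_
  rw [det_restrictScalars_toSpanSingleton, abs_of_nonneg (by positivity),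
    ENNReal.ofReal_pow (norm_nonneg _), ofReal_norm]

/-- The sector of those `z` whose argument lies in the `j`-th of the `k` half-open arcs of equal
length into which `(-π, π]` is divided, numbered from `1` to `k`; `z ↦ z ^ k` is injective there. -/
def angularSector (k : ℕ) (j : ℤ) : Set ℂ :=
  {z | ⌈k * (z.arg + π) / (2 * π)⌉ = j}

theorem measurableSet_angularSector (k : ℕ) (j : ℤ) : MeasurableSet (angularSector k j) :=
  measurableSet_eq_fun (by fun_prop) measurable_const

theorem iUnion_angularSector {k : ℕ} (hk : k ≠ 0) :
    ⋃ j ∈ Finset.Icc (1 : ℤ) k, angularSector k j = univ := by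
  refine eq_univ_of_forall fun z => ?_
  simp only [angularSector, mem_iUnion, Finset.mem_Icc, mem_ofPred_eq, exists_prop,
    exists_eq_right']
  have arg_add_pi_pos : 0 < z.arg + π := by linarith [z.neg_pi_lt_arg]
  have arg_add_pi_le : z.arg + π ≤ 2 * π := by linarith [z.arg_le_pi]
  constructor
  · rw [Int.one_le_ceil_iff]
    positivity
  · rw [Int.ceil_le, div_le_iff₀ two_pi_pos, Int.cast_natCast]
    gcongr

theorem injOn_pow_angularSector {k : ℕ} (hk : k ≠ 0) (j : ℤ) :
    InjOn (fun z : ℂ => z ^ k) (angularSector k j) := by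
  intro z hz w hw hzw
  simp only at hzw
  have norm_eq : ‖z‖ = ‖w‖ := by
    rw [← pow_left_inj₀ (norm_nonneg z) (norm_nonneg w) hk, ← norm_pow, ← norm_pow, hzw]
  obtain ⟨n, hn⟩ : ∃ n : ℤ, k * z.arg - k * w.arg = 2 * π * n := by
    rw [← Real.Angle.angle_eq_iff_two_pi_dvd_sub]
    simpa [Complex.arg_pow_coe_angle] using congrArg (fun u : ℂ => (u.arg : Real.Angle)) hzw
  have shift : k * (z.arg + π) / (2 * π) = k * (w.arg + π) / (2 * π) + n := by
    field_simp
    linarith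
  have n_eq_zero : n = 0 := by
    have hz' : ⌈k * (z.arg + π) / (2 * π)⌉ = j := hz
    have hw' : ⌈k * (w.arg + π) / (2 * π)⌉ = j := hw
    rw [shift, Int.ceil_add_intCast, hw'] at hz'
    lia
  refine Complex.ext_norm_arg norm_eq ?_
  simpa [n_eq_zero, hk, sub_eq_zero] using hn

theorem mul_setLIntegral_comp_pow_le {k : ℕ} (hk : k ≠ 0) {s : Set ℂ} (hs : MeasurableSet s)
    (G : ℂ → ℝ≥0∞) :
    k * ∫⁻ t in s, ‖t‖ₑ ^ (2 * (k - 1)) * G (t ^ k) ≤ ∫⁻ w in (· ^ k) '' s, G w := by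
  have area : ∫⁻ t in s, ‖k * t ^ (k - 1)‖ₑ ^ 2 * G (t ^ k) ≤ k * ∫⁻ w in (· ^ k) '' s, G w := by
    simpa using setLIntegral_enorm_deriv_sq_mul_le_card_mul hs
      (fun j _ => measurableSet_angularSector k j)
      ((subset_univ s).trans_eq (iUnion_angularSector hk).symm)
      (fun t _ => (hasDerivAt_pow k t).hasDerivWithinAt)
      (fun j _ => (injOn_pow_angularSector hk j).mono inter_subset_right) G
  refine (ENNReal.mul_le_mul_iff_right (by simpa using hk) (natCast_ne_top k)).1
    (le_of_eq_of_le ?_ area)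
  rw [← lintegral_const_mul' _ _ (natCast_ne_top k), ← lintegral_const_mul' _ _ (natCast_ne_top k)]
  refine lintegral_congr fun t => ?_
  have : ‖(k : ℂ)‖ₑ = k := by simp [← ofReal_norm]
  rw [enorm_mul, enorm_pow, this]
  ring

end PowerMap

section BranchedCurve

open Metric Real

variable {E : Type*} [NormedAddCommGroup E] [NormedSpace ℂ E] [CompleteSpace E]

theorem mul_setLIntegral_enorm_rpow_branched_curve_le {m k : ℕ} (hk : k ≠ 0) {s : Set ℂ}
    (hs : MeasurableSet s) (hs1 : s ⊆ ball 0 1) {γ : ℂ → Fin m → ℂ} {ρ : Fin m → ℝ}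
    (hρ : ∀ l, ρ l < 1) (hγ : ∀ t ∈ s, ∀ l, ‖γ t l‖ ≤ ρ l) {F : (Fin (m + 1) → ℂ) → E}
    (hF : DifferentiableOn ℂ F (polydisc 0 1)) {p : ℝ} (hp : 1 ≤ p) :
    k * ∫⁻ t in s, ‖t‖ₑ ^ (2 * (k - 1)) *
        (ENNReal.ofReal (∏ l, π * (1 - ρ l) ^ 2) * ‖F (Fin.cons (t ^ k) (γ t))‖ₑ ^ p) ≤
      ∫⁻ z in polydisc 0 1, ‖F z‖ₑ ^ p := by
  have pow_mem_ball {t : ℂ} (ht : t ∈ s) : t ^ k ∈ ball (0 : ℂ) 1 := by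
    rw [mem_ball_zero_iff, norm_pow]
    exact pow_lt_one₀ (norm_nonneg t) (mem_ball_zero_iff.1 (hs1 ht)) hk
  calc k * ∫⁻ t in s, ‖t‖ₑ ^ (2 * (k - 1)) *
          (ENNReal.ofReal (∏ l, π * (1 - ρ l) ^ 2) * ‖F (Fin.cons (t ^ k) (γ t))‖ₑ ^ p)
      ≤ k * ∫⁻ t in s, ‖t‖ₑ ^ (2 * (k - 1)) *
          ∫⁻ y in polydisc 0 1, ‖F (Fin.cons (t ^ k) y)‖ₑ ^ p := by
        refine mul_le_mul_right (setLIntegral_mono' hs fun t ht => ?_) _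
        gcongr
        exact prod_mul_enorm_rpow_le_setLIntegral_polydisc (hγ t ht) hρ
          (differentiableOn_comp_cons_left hF (pow_mem_ball ht)) hp
    _ ≤ ∫⁻ x in (· ^ k) '' s, ∫⁻ y in polydisc 0 1, ‖F (Fin.cons x y)‖ₑ ^ p :=
        mul_setLIntegral_comp_pow_le hk hs _
    _ ≤ ∫⁻ x in ball 0 1, ∫⁻ y in polydisc 0 1, ‖F (Fin.cons x y)‖ₑ ^ p :=
        lintegral_mono_set (image_subset_iff.2 fun t ht => pow_mem_ball ht)
    _ = ∫⁻ z in polydisc 0 1, ‖F z‖ₑ ^ p :=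
        (setLIntegral_polydisc_eq_setLIntegral_cons ((hF.continuousOn.enorm.aemeasurable
          (measurableSet_polydisc 0 1)).pow_const p)).symm

theorem stmt_18_general (m : ℕ) {s : Set ℂ} (hs : MeasurableSet s) (hs1 : s ⊆ ball 0 1)
    (i₁ : ℕ) (hi₁ : 1 ≤ i₁) (g : Fin m → ℂ → ℂ) {ρ : Fin m → ℝ} (hρ : ∀ l, ρ l < 1)
    (hgbd : ∀ l, ∀ t ∈ s, ‖g l t‖ ≤ ρ l) {p : ℝ} (hp : 1 ≤ p) (F : (Fin (m + 1) → ℂ) → E)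
    (hF : DifferentiableOn ℂ F {z : Fin (m + 1) → ℂ | ∀ i, ‖z i‖ < 1}) :
    ENNReal.ofReal ((∏ l, π * (1 - ρ l) ^ 2) * i₁) *
        ∫⁻ t in s, ENNReal.ofReal (‖F (Fin.cons (t ^ i₁) (fun l => g l t))‖ ^ p *
          ‖t‖ ^ (2 * (i₁ - 1))) ≤
      ∫⁻ z in {z : Fin (m + 1) → ℂ | ∀ i, ‖z i‖ < 1}, ENNReal.ofReal (‖F z‖ ^ p) := by
  have ofReal_norm_rpow (x : E) : ENNReal.ofReal (‖x‖ ^ p) = ‖x‖ₑ ^ p := by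
    rw [← ENNReal.ofReal_rpow_of_nonneg (norm_nonneg x) (by linarith), ofReal_norm]
  rw [setOf_norm_lt_one_eq_polydisc] at hF ⊢
  convert mul_setLIntegral_enorm_rpow_branched_curve_le (by lia : i₁ ≠ 0) hs hs1 hρ
    (fun t ht l => hgbd l t ht) hF hp using 1
  · rw [ENNReal.ofReal_mul (by positivity), ofReal_natCast, mul_comm (ENNReal.ofReal _), mul_assoc,
      ← lintegral_const_mul' _ _ ofReal_ne_top]
    congr 1
    refine lintegral_congr fun t => ?_
    rw [ENNReal.ofReal_mul (by positivity), ofReal_norm_rpow,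
      ENNReal.ofReal_pow (norm_nonneg _), ofReal_norm]
    ring
  · simp only [ofReal_norm_rpow]

end BranchedCurve

/-- Comparison of the `L²` norm of a holomorphic `F` on the unit polydisc
`Δⁿ ⊂ ℂⁿ` (`n = m + 1 ≥ 2`) with the `L²` norm of its restriction to the
analytic curve `t ↦ (t^{i₁}, g₂(t), …, g_n(t))` contained in the cone
`{|z''| ≤ |z₁|/6}`, integrated against the pushforward of planar Lebesgue
measure under the degree-`i₁` branched projection `z ↦ z₁`. -/
theorem stmt_18 (m : ℕ) (hm : 1 ≤ m) (r : ℝ) (hr0 : 0 < r) (hr1 : r ≤ 1)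
    (i₁ : ℕ) (hi₁ : 1 ≤ i₁) (g : Fin m → ℂ → ℂ)
    (hg : ∀ l, DifferentiableOn ℂ (g l) (Metric.ball 0 r))
    (hgbd : ∀ l, ∀ t ∈ Metric.ball (0 : ℂ) r, ‖g l t‖ ≤ 1 / 6)
    (F : (Fin (m + 1) → ℂ) → ℂ)
    (hF : DifferentiableOn ℂ F {z : Fin (m + 1) → ℂ | ∀ i, ‖z i‖ < 1}) :
    ENNReal.ofReal ((Real.pi / 3) ^ m * (i₁ : ℝ)) *
        ∫⁻ t in Metric.ball (0 : ℂ) r,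
          ENNReal.ofReal (‖F (Fin.cons (t ^ i₁) (fun l => g l t))‖ ^ 2 *
            ‖t‖ ^ (2 * (i₁ - 1))) ≤
      ∫⁻ z in {z : Fin (m + 1) → ℂ | ∀ i, ‖z i‖ < 1}, ENNReal.ofReal (‖F z‖ ^ 2) := by
  have general := stmt_18_general m measurableSet_ball (Metric.ball_subset_ball hr1) i₁ hi₁ g
    (ρ := fun _ => 1 / 6) (fun _ => by norm_num) hgbd one_le_two F hF
  simp only [Finset.prod_const, Finset.card_univ, Fintype.card_fin, Real.rpow_two] at general
  refine le_trans ?_ general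
  gcongr
  linarith [Real.pi_pos]
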